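/- (Lemma 10, part 2: likelihood ratio on the typical set.) Let X, Y be finite alphabets and let G = (g_{y|x}), P = (p_{y|x}) be stochastic matrices with the property that g_{y|x} > 0 implies p_{y|x} > 0. Fix epsilon_1, epsilon_2 > 0, a string x in X^d with type r(x), and any y in the conditionally typical set J_x^{epsilon_1, epsilon_2} (in particular with prod_t g_{y_t|x_t} > 0). Then prod_{t=1}^d p_{y_t|x_t} / prod_{t=1}^d g_{y_t|x_t} >= exp( -d [ D(G||P | r(x)) + (2 epsilon_2 + epsilon_1) * S ] ), where S = sum over pairs (x,y) with n_x(x) != 0 and g_{y|x} != 0 of |ln(g_{y|x}/p_{y|x})|. Consequently the ratio is also at least exp(-d [ max_r D(G||P|r) + (2 epsilon_2 + epsilon_1) S ]), the maximum taken over probability vectors r on X. -/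

import Mathlib

open scoped BigOperators Classical

noncomputable section

/-- `G` is a stochastic matrix. -/
def IsStochastic {X Y : Type} [Fintype X] [Fintype Y] (P : X → Y → ℝ) : Prop :=
  ∀ x, (∀ y, 0 ≤ P x y) ∧ ∑ y, P x y = 1

/-- `r` is a probability vector. -/
def IsProbVec {X : Type} [Fintype X] (q : X → ℝ) : Prop :=
  (∀ x, 0 ≤ q x) ∧ ∑ x, q x = 1

/-- Count `n_x(x̄)` of positions of the string `x̄` equal to the letter `a`. -/
def nxCount {X : Type} [Fintype X] [DecidableEq X] {d : ℕ} (x : Fin d → X) (a : X) : ℕ :=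
  (Finset.univ.filter fun t => x t = a).card

/-- Joint count `n_{x,y}(x̄,ȳ)` of positions `t` with `(x̄ t, ȳ t) = (a,b)`. -/
def nxyCount {X Y : Type} [Fintype X] [Fintype Y] [DecidableEq X] [DecidableEq Y]
    {d : ℕ} (x : Fin d → X) (y : Fin d → Y) (a : X) (b : Y) : ℕ :=
  (Finset.univ.filter fun t => x t = a ∧ y t = b).card

/-- The empirical distribution (type) of a string `x ∈ X^d`. -/
def empDist {X : Type} [Fintype X] [DecidableEq X] {d : ℕ} (x : Fin d → X) : X → ℝ :=
  fun a => ((nxCount x a : ℝ)) / d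

/-- The conditional divergence `D(G‖P|r)`. -/
def condDiv {X Y : Type} [Fintype X] [Fintype Y] (G P : X → Y → ℝ) (r : X → ℝ) : ℝ :=
  ∑ x, r x * ∑ y, G x y * Real.log (G x y / P x y)

/-- The conditionally typical set `J_x^{ε₁,ε₂}`. -/
def CondTypical {X Y : Type} [Fintype X] [Fintype Y] [DecidableEq X] [DecidableEq Y]
    (G : X → Y → ℝ) (ε1 ε2 : ℝ) {d : ℕ} (x : Fin d → X) (y : Fin d → Y) : Prop :=
  ∀ a : X, ((nxCount x a : ℝ) / d < ε2) ∨
    ∀ b : Y, (nxyCount x y a b : ℝ) / (nxCount x a) ∈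
      Set.Ioo (G a b - ε1) (G a b + ε1)

/-!
Grouping positions by letter pairs, the log-likelihood ratio `∑_t ln(g_{y_t|x_t}/p_{y_t|x_t})` is
the sum of `ln(g_{b|a}/p_{b|a})` weighted by the joint counts `n_{x,y}(a, b)`. Replacing these by
their means `n_x(a) g_{b|a}` gives exactly `d · D(G‖P|r(x))`. Typicality controls the error of each
replacement by `d · max ε₁ ε₂`: if `a` is rare, then `n_{x,y}(a, b)` and `n_x(a) g_{b|a}` both lie
in `[0, n_x(a)]`, an interval of length at most `d ε₂`; otherwise the conditional frequency is
within `ε₁` of `g_{b|a}`.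
-/

lemma prod_div_prod_eq_exp_neg_sum_log {ι : Type*} (s : Finset ι) {p g : ι → ℝ}
    (hp : ∀ i ∈ s, 0 < p i) (hg : ∀ i ∈ s, 0 < g i) :
    (∏ i ∈ s, p i) / ∏ i ∈ s, g i = Real.exp (-∑ i ∈ s, Real.log (g i / p i)) := by
  rw [← Finset.prod_div_distrib, ← Finset.sum_neg_distrib, Real.exp_sum]
  refine Finset.prod_congr rfl fun i hi => ?_
  rw [← Real.log_inv, inv_div, Real.exp_log (div_pos (hp i hi) (hg i hi))]

section Counts

variable {X Y : Type} [Fintype X] [DecidableEq X] [Fintype Y] [DecidableEq Y] {d : ℕ}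

lemma nxCount_le (x : Fin d → X) (a : X) : nxCount x a ≤ d :=
  (Finset.card_le_univ _).trans_eq (Fintype.card_fin d)

lemma nxyCount_le_nxCount (x : Fin d → X) (y : Fin d → Y) (a : X) (b : Y) :
    nxyCount x y a b ≤ nxCount x a :=
  Finset.card_le_card <| Finset.monotone_filter_right _ fun _ _ h => h.1

lemma sum_nxCount (x : Fin d → X) : ∑ a, nxCount x a = d :=
  (Finset.card_eq_sum_card_fiberwise fun t _ => Finset.mem_coe.2 (Finset.mem_univ (x t))).symm.trans
    (Finset.card_fin d)

lemma sum_eq_sum_nxyCount_nsmul {M : Type*} [AddCommMonoid M] (x : Fin d → X) (y : Fin d → Y)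
    (f : X → Y → M) : ∑ t, f (x t) (y t) = ∑ a, ∑ b, nxyCount x y a b • f a b := by
  rw [← Finset.sum_fiberwise Finset.univ (fun t => (x t, y t)), Fintype.sum_prod_type]
  refine Finset.sum_congr rfl fun a _ => Finset.sum_congr rfl fun b _ => ?_
  simp only [Prod.mk.injEq]
  refine Finset.sum_eq_card_nsmul fun t ht => ?_
  obtain ⟨rfl, rfl⟩ := (Finset.mem_filter.1 ht).2
  rfl

lemma length_mul_empDist (x : Fin d → X) (a : X) : d * empDist x a = nxCount x a :=
  mul_div_cancel_of_imp' fun hd =>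
    le_antisymm ((Nat.cast_le.2 (nxCount_le x a)).trans hd.le) (by positivity)

lemma isProbVec_empDist (hd : d ≠ 0) (x : Fin d → X) : IsProbVec (empDist x) := by
  refine ⟨fun a => by unfold empDist; positivity, ?_⟩
  simp only [empDist]
  rw [← Finset.sum_div, ← Nat.cast_sum, sum_nxCount, div_self (Nat.cast_ne_zero.2 hd)]

end Counts

lemma bddAbove_condDiv {X Y : Type} [Fintype X] [Fintype Y] (G P : X → Y → ℝ) :
    BddAbove {v | ∃ r : X → ℝ, IsProbVec r ∧ v = condDiv G P r} := by
  have hcont : Continuous (condDiv G P) := by unfold condDiv; fun_prop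
  refine ((isCompact_stdSimplex ℝ X).image hcont).bddAbove.mono ?_
  rintro _ ⟨r, hr, rfl⟩
  exact ⟨r, hr, rfl⟩

namespace CondTypical

variable {X Y : Type} [Fintype X] [DecidableEq X] [Fintype Y] [DecidableEq Y]
  {G : X → Y → ℝ} {ε1 ε2 : ℝ} {d : ℕ} {x : Fin d → X} {y : Fin d → Y}

lemma mono {ε1' ε2' : ℝ} (h1 : ε1 ≤ ε1') (h2 : ε2 ≤ ε2') (hy : CondTypical G ε1 ε2 x y) :
    CondTypical G ε1' ε2' x y := fun a =>
  (hy a).imp (·.trans_le h2) fun h b =>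
    Set.Ioo_subset_Ioo (sub_le_sub_left h1 _) (add_le_add_right h1 _) (h b)

lemma abs_nxyCount_sub_le (hy : CondTypical G ε1 ε2 x y) (hG : ∀ a b, G a b ∈ Set.Icc 0 1)
    (a : X) (b : Y) :
    |(nxyCount x y a b : ℝ) - nxCount x a * G a b| ≤ d * max ε1 ε2 := by
  have hle : (nxyCount x y a b : ℝ) ≤ nxCount x a := Nat.cast_le.2 (nxyCount_le_nxCount x y a b)
  rcases hy a with hrare | hfreq
  · have hmean_nonneg : 0 ≤ nxCount x a * G a b := mul_nonneg (by positivity) (hG a b).1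
    have hmean_le : nxCount x a * G a b ≤ nxCount x a :=
      mul_le_of_le_one_right (by positivity) (hG a b).2
    calc |(nxyCount x y a b : ℝ) - nxCount x a * G a b|
        ≤ nxCount x a := abs_sub_le_of_nonneg_of_le (by positivity) hle hmean_nonneg hmean_le
      _ = d * empDist x a := (length_mul_empDist x a).symm
      _ ≤ d * max ε1 ε2 := by gcongr; exact hrare.le.trans (le_max_right _ _)
  · have hdev : |(nxyCount x y a b : ℝ) / nxCount x a - G a b| ≤ max ε1 ε2 :=
      (abs_sub_lt_iff.2 ⟨by linarith [(hfreq b).2], by linarith [(hfreq b).1]⟩).le.trans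
        (le_max_left _ _)
    have hcount : (nxCount x a : ℝ) * (nxyCount x y a b / nxCount x a) = nxyCount x y a b :=
      mul_div_cancel_of_imp' fun h => le_antisymm (hle.trans h.le) (by positivity)
    calc |(nxyCount x y a b : ℝ) - nxCount x a * G a b|
        = nxCount x a * |(nxyCount x y a b : ℝ) / nxCount x a - G a b| := by
          rw [← Nat.abs_cast (nxCount x a), ← abs_mul, Nat.abs_cast, mul_sub, hcount]
      _ ≤ d * max ε1 ε2 := by
          gcongr
          exact nxCount_le x a

lemma abs_sum_sub_mean_le (hy : CondTypical G ε1 ε2 x y) (hG : ∀ a b, G a b ∈ Set.Icc 0 1)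
    {f : X → Y → ℝ} (hf : ∀ a b, G a b = 0 → f a b = 0) :
    |∑ t, f (x t) (y t) - d * ∑ a, empDist x a * ∑ b, G a b * f a b| ≤
      d * (max ε1 ε2 * ∑ a, ∑ b, if nxCount x a ≠ 0 ∧ G a b ≠ 0 then |f a b| else 0) := by
  have hsum : ∑ t, f (x t) (y t) - d * ∑ a, empDist x a * ∑ b, G a b * f a b =
      ∑ a, ∑ b, ((nxyCount x y a b : ℝ) - nxCount x a * G a b) * f a b := by
    simp only [sum_eq_sum_nxyCount_nsmul, nsmul_eq_mul, Finset.mul_sum, ← Finset.sum_sub_distrib,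
      ← mul_assoc, length_mul_empDist, sub_mul]
  have hterm (a : X) (b : Y) : |((nxyCount x y a b : ℝ) - nxCount x a * G a b) * f a b| ≤
      d * max ε1 ε2 * if nxCount x a ≠ 0 ∧ G a b ≠ 0 then |f a b| else 0 := by
    split_ifs with h
    · rw [abs_mul]
      gcongr
      exact hy.abs_nxyCount_sub_le hG a b
    · rcases not_and_or.1 h with ha | hab
      · have hxy : nxyCount x y a b = 0 :=
          Nat.eq_zero_of_le_zero ((nxyCount_le_nxCount x y a b).trans_eq (not_not.1 ha))
        simp [not_not.1 ha, hxy]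
      · simp [hf a b (not_not.1 hab)]
  rw [hsum, ← mul_assoc]
  simp only [Finset.mul_sum]
  exact (Finset.abs_sum_le_sum_abs _ _).trans <| Finset.sum_le_sum fun a _ =>
    (Finset.abs_sum_le_sum_abs _ _).trans <| Finset.sum_le_sum fun b _ => hterm a b

end CondTypical

theorem typical_likelihood_ratio_general
    {X Y : Type} [Fintype X] [Fintype Y] [DecidableEq X] [DecidableEq Y]
    {G P : X → Y → ℝ} (hG : ∀ a b, G a b ∈ Set.Icc 0 1) (habs : ∀ a b, 0 < G a b → 0 < P a b)
    {ε1 ε2 : ℝ} {d : ℕ} {x : Fin d → X} {y : Fin d → Y}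
    (hy : CondTypical G ε1 ε2 x y) (hpos : 0 < ∏ t, G (x t) (y t))
    {S : ℝ}
    (hS : S = ∑ a : X, ∑ b : Y,
      (if nxCount x a ≠ 0 ∧ G a b ≠ 0 then |Real.log (G a b / P a b)| else 0)) :
    Real.exp (-(d : ℝ) * (condDiv G P (empDist x) + max ε1 ε2 * S)) ≤
      (∏ t, P (x t) (y t)) / (∏ t, G (x t) (y t)) ∧
    Real.exp (-(d : ℝ) * (sSup {v | ∃ r : X → ℝ, IsProbVec r ∧ v = condDiv G P r}
        + max ε1 ε2 * S)) ≤
      (∏ t, P (x t) (y t)) / (∏ t, G (x t) (y t)) := by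
  have hG_pos (t : Fin d) : 0 < G (x t) (y t) :=
    (hG _ _).1.lt_of_ne' (Finset.prod_ne_zero_iff.1 hpos.ne' t (Finset.mem_univ t))
  have hlog : ∑ t, Real.log (G (x t) (y t) / P (x t) (y t)) ≤
      d * (condDiv G P (empDist x) + max ε1 ε2 * S) := by
    have hdev := hy.abs_sum_sub_mean_le hG (f := fun a b => Real.log (G a b / P a b))
      fun a b hab => by simp [hab]
    rw [← hS, ← condDiv] at hdev
    linarith [le_of_abs_le hdev]
  have hsup : d * condDiv G P (empDist x) ≤
      d * sSup {v | ∃ r : X → ℝ, IsProbVec r ∧ v = condDiv G P r} := by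
    rcases eq_or_ne d 0 with rfl | hd
    · simp
    · gcongr
      exact le_csSup (bddAbove_condDiv G P) ⟨_, isProbVec_empDist hd x, rfl⟩
  rw [prod_div_prod_eq_exp_neg_sum_log _ (fun t _ => habs _ _ (hG_pos t)) fun t _ => hG_pos t,
    Real.exp_le_exp, Real.exp_le_exp]
  constructor <;> linarith

/-- **Lemma 10, part 2 (likelihood ratio on the typical set).**  Let `G, P` be
stochastic matrices with `g_{y|x} > 0 → p_{y|x} > 0`, `ε₁, ε₂ > 0`, `x̄ ∈ X^d` with
type `r(x̄)`, and `ȳ` conditionally typical for `x̄` with `∏_t g_{ȳ_t|x̄_t} > 0`.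
Then the likelihood ratio `∏_t p_{ȳ_t|x̄_t} / ∏_t g_{ȳ_t|x̄_t}` is at least
`exp(-d[D(G‖P|r(x̄)) + (2ε₂+ε₁)S])`, where
`S = ∑_{(a,b) : n_a ≠ 0, g_{b|a} ≠ 0} |ln(g_{b|a}/p_{b|a})|`; consequently it is also
at least `exp(-d[max_r D(G‖P|r) + (2ε₂+ε₁)S])`, the maximum over probability
vectors `r`. -/
theorem typical_likelihood_ratio
    {X Y : Type} [Fintype X] [Fintype Y] [DecidableEq X] [DecidableEq Y]
    (G P : X → Y → ℝ) (hG : IsStochastic G) (hP : IsStochastic P)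
    (habs : ∀ x y, 0 < G x y → 0 < P x y)
    (ε1 ε2 : ℝ) (hε1 : 0 < ε1) (hε2 : 0 < ε2)
    {d : ℕ} (x : Fin d → X) (y : Fin d → Y)
    (hy : CondTypical G ε1 ε2 x y) (hpos : 0 < ∏ t, G (x t) (y t))
    (S : ℝ)
    (hS : S = ∑ a : X, ∑ b : Y,
      (if nxCount x a ≠ 0 ∧ G a b ≠ 0 then |Real.log (G a b / P a b)| else 0)) :
    Real.exp (-(d : ℝ) * (condDiv G P (empDist x) + (2 * ε2 + ε1) * S)) ≤
      (∏ t, P (x t) (y t)) / (∏ t, G (x t) (y t)) ∧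
    Real.exp (-(d : ℝ) * (sSup {v | ∃ r : X → ℝ, IsProbVec r ∧ v = condDiv G P r}
        + (2 * ε2 + ε1) * S)) ≤
      (∏ t, P (x t) (y t)) / (∏ t, G (x t) (y t)) := by
  have hy' := hy.mono (ε1' := 2 * ε2 + ε1) (ε2' := 2 * ε2 + ε1) (by linarith) (by linarith)
  simpa only [max_self] using
    typical_likelihood_ratio_general (fun a => mem_Icc_of_mem_stdSimplex (hG a)) habs hy' hpos hS

end
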